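/- arXiv:0708.1113 — 7 statements merged into one kernel-verified Lean document; each statement's English description precedes it below -/
import Mathlib

section
/- Fix an integer n ≥ 1. There exist constants C > 0 and δ > 0, depending only on n, such that for every positive definite quadratic form Q on ℝⁿ one has ∫_{{x ∈ ℝⁿ : Q(x) ≤ 1}} ∏_{i=1}^{n} |x_i|^{-1/2} dx ≤ C · exp(−δ·Δ(Q)) · vol({x ∈ ℝⁿ : Q(x) ≤ 1})^{1/2}, where Δ(Q) is the infimum, over all invertible diagonal real n×n matrices D, of log( sup_{‖x‖=1} Q(Dx) / inf_{‖x‖=1} Q(Dx) ), the supremum and infimum being taken over the Euclidean unit sphere. -/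
open MeasureTheory Matrix

lemma half_bound (s σ : ℝ) (hs1 : s ≤ 3/4) (hσ : 0 < σ) :
    ∫⁻ t in Set.Ioc 0 σ, ENNReal.ofReal (|t| ^ (-s)) ≤ ENNReal.ofReal (4 * σ ^ (1 - s)) := by
  have h1 : ∫⁻ t in Set.Ioc 0 σ, ENNReal.ofReal (|t| ^ (-s)) = ∫⁻ t in Set.Ioc 0 σ, ENNReal.ofReal (t ^ (-s)) := by
    apply setLIntegral_congr_fun measurableSet_Ioc
    intro t ht
    simp only [abs_of_pos ht.1]
  have hi := (intervalIntegral.intervalIntegrable_rpow' (a := 0) (b := σ) (r := -s) (by linarith))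
  rw [intervalIntegrable_iff_integrableOn_Ioc_of_le hσ.le] at hi
  rw [h1, ← ofReal_integral_eq_lintegral_ofReal hi
    (ae_restrict_of_forall_mem measurableSet_Ioc fun t ht => Real.rpow_nonneg ht.1.le _),
    ← intervalIntegral.integral_of_le hσ.le, integral_rpow (Or.inl (by linarith))]
  apply ENNReal.ofReal_le_ofReal
  rw [Real.zero_rpow (by linarith), sub_zero, div_le_iff₀ (by linarith), show -s + 1 = 1 - s by ring]
  have := Real.rpow_nonneg hσ.le (1 - s)
  nlinarith

lemma one_dim (s σ m : ℝ) (hs0 : 0 ≤ s) (hs1 : s ≤ 3/4) (hσ : 0 < σ) :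
    ∫⁻ t in {t : ℝ | |t - m| ≤ σ}, ENNReal.ofReal (|t| ^ (-s)) ≤ ENNReal.ofReal (10 * σ ^ (1 - s)) := by
  have hm : Measurable fun t : ℝ => ENNReal.ofReal (|t| ^ (-s)) := by fun_prop
  have hset : {t : ℝ | |t - m| ≤ σ} = Set.Icc (m - σ) (m + σ) := by
    ext t; simp only [Set.mem_ofPred_eq, Set.mem_Icc, abs_le]; constructor <;> rintro ⟨h1, h2⟩ <;> constructor <;> linarith
  have hneg : ∫⁻ t in Set.Ico (-σ) 0, ENNReal.ofReal (|t| ^ (-s)) ≤ ENNReal.ofReal (4 * σ ^ (1 - s)) := by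
    rw [← (Measure.measurePreserving_neg (volume : Measure ℝ)).setLIntegral_comp_preimage measurableSet_Ico hm]
    have : (Neg.neg ⁻¹' Set.Ico (-σ) (0:ℝ)) = Set.Ioc 0 σ := by
      ext t; simp [and_comm]
    rw [this]
    simp only [abs_neg]
    exact half_bound s σ hs1 hσ
  have hsub : {t : ℝ | |t - m| ≤ σ} ⊆ ((Set.Ico (-σ) 0 ∪ Set.Ioc 0 σ) ∪ {0}) ∪ (Set.Icc (m - σ) (m + σ) ∩ {t | σ < |t|}) := by
    rw [hset]
    intro t ht
    by_cases h : σ < |t|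
    · exact Or.inr ⟨ht, h⟩
    · left
      have := abs_le.1 (not_lt.1 h)
      rcases lt_trichotomy t 0 with h' | h' | h'
      · exact Or.inl (Or.inl ⟨this.1, h'⟩)
      · exact Or.inr h'
      · exact Or.inl (Or.inr ⟨h', this.2⟩)
  have hfar : ∫⁻ t in (Set.Icc (m - σ) (m + σ) ∩ {t | σ < |t|}), ENNReal.ofReal (|t| ^ (-s)) ≤ ENNReal.ofReal (2 * σ ^ (1 - s)) := by
    calc _ ≤ ∫⁻ t in (Set.Icc (m - σ) (m + σ) ∩ {t | σ < |t|}), ENNReal.ofReal (σ ^ (-s)) := by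
          apply setLIntegral_mono' (measurableSet_Icc.inter (measurableSet_lt measurable_const (by fun_prop)))
          intro t ht
          apply ENNReal.ofReal_le_ofReal
          exact Real.rpow_le_rpow_of_nonpos hσ ht.2.le (by linarith)
      _ ≤ ∫⁻ t in (Set.Icc (m - σ) (m + σ)), ENNReal.ofReal (σ ^ (-s)) := 
          lintegral_mono_set Set.inter_subset_left
      _ = ENNReal.ofReal (2 * σ ^ (1 - s)) := by
          rw [setLIntegral_const, Real.volume_Icc, ← ENNReal.ofReal_mul (by positivity)]
          congr 1
          rw [show (1 - s) = -s + 1 by ring, Real.rpow_add_one hσ.ne']; ring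
  have h0 : ∫⁻ t in ({0} : Set ℝ), ENNReal.ofReal (|t| ^ (-s)) = 0 := by simp
  have hp : 0 ≤ σ ^ (1 - s) := by positivity
  calc _ ≤ _ := lintegral_mono_set hsub
    _ ≤ _ := lintegral_union_le _ _ _
    _ ≤ _ := add_le_add_left ((lintegral_union_le _ _ _).trans (add_le_add_left (lintegral_union_le _ _ _) _)) _
    _ ≤ ((ENNReal.ofReal (4 * σ ^ (1 - s)) + ENNReal.ofReal (4 * σ ^ (1 - s))) + 0) + ENNReal.ofReal (2 * σ ^ (1 - s)) := by
        gcongr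
        · exact half_bound s σ hs1 hσ
        · exact h0.le
    _ = ENNReal.ofReal (10 * σ ^ (1 - s)) := by
        rw [add_zero, ← ENNReal.ofReal_add (by positivity) (by positivity), ← ENNReal.ofReal_add (by positivity) (by positivity)]
        congr 1; ring

/-- Schur complement -/
noncomputable def schur {n : ℕ} (S : Matrix (Fin (n+1)) (Fin (n+1)) ℝ) (j : Fin (n+1)) : Matrix (Fin n) (Fin n) ℝ :=
  fun p q => S (j.succAbove p) (j.succAbove q) - S (j.succAbove p) j / S j j * S j (j.succAbove q)

noncomputable def shift {n : ℕ} (S : Matrix (Fin (n+1)) (Fin (n+1)) ℝ) (j : Fin (n+1)) (y : Fin n → ℝ) : ℝ :=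
  - (∑ p, S j (j.succAbove p) * y p) / S j j

lemma det_schur {n : ℕ} (S : Matrix (Fin (n+1)) (Fin (n+1)) ℝ) (j : Fin (n+1)) (h : S j j ≠ 0) :
    S.det = S j j * (schur S j).det := by
  let c : Fin (n+1) → ℝ := fun i => if i = j then 0 else S i j / S j j
  let B : Matrix (Fin (n+1)) (Fin (n+1)) ℝ := fun i l => S i l - c i * S j l
  have h1 : S.det = B.det := by
    apply det_eq_of_forall_row_eq_smul_add_const c j (by simp [c])
    intro i l
    simp [B, c]
  rw [h1, det_succ_column B j, Finset.sum_eq_single j]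
  · have : B.submatrix j.succAbove j.succAbove = schur S j := by
      ext p q
      rw [submatrix_apply]
      simp [B, c, schur, Fin.succAbove_ne]
    rw [this]
    have e : (-1 : ℝ) ^ ((j:ℕ) + j) = 1 := Even.neg_one_pow ⟨_, rfl⟩
    rw [e]; simp [B, c]
  · intro i _ hi
    have : B i j = 0 := by simp [B, c, hi]; field_simp; simp
    simp [this]
  · simp

lemma quad_schur {n : ℕ} (S : Matrix (Fin (n+1)) (Fin (n+1)) ℝ) (hS : S.IsSymm) (j : Fin (n+1)) (h : S j j ≠ 0)
    (t : ℝ) (y : Fin n → ℝ) :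
    (j.insertNth t y : Fin (n+1) → ℝ) ⬝ᵥ S *ᵥ (j.insertNth t y : Fin (n+1) → ℝ)
      = S j j * (t - shift S j y)^2 + y ⬝ᵥ (schur S j) *ᵥ y := by
  have hs : ∀ p, S (j.succAbove p) j = S j (j.succAbove p) := fun p => hS.apply _ _
  set L := ∑ p, S j (j.succAbove p) * y p with hL
  have h2 : y ⬝ᵥ (schur S j) *ᵥ y = (∑ p, y p * ∑ q, S (j.succAbove p) (j.succAbove q) * y q) - L^2 / S j j := by
    have : ∀ p, (schur S j *ᵥ y) p = (∑ q, S (j.succAbove p) (j.succAbove q) * y q) - S j (j.succAbove p) / S j j * L := by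
      intro p
      simp only [mulVec, dotProduct, schur, hs, sub_mul, Finset.sum_sub_distrib, hL, Finset.mul_sum]
      congr 1; apply Finset.sum_congr rfl; intros; ring
    simp only [dotProduct, this, mul_sub, Finset.sum_sub_distrib]
    congr 1
    rw [sq, mul_div_assoc, hL, Finset.sum_mul]
    apply Finset.sum_congr rfl; intros; ring
  have h3 : (j.insertNth t y : Fin (n+1) → ℝ) ⬝ᵥ S *ᵥ (j.insertNth t y : Fin (n+1) → ℝ)
      = t * (S j j * t + L) + ((∑ p, y p * (S j (j.succAbove p) * t)) + ∑ p, y p * ∑ q, S (j.succAbove p) (j.succAbove q) * y q) := by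
    simp only [dotProduct, mulVec, Fin.sum_univ_succAbove _ j, Fin.insertNth_apply_same, Fin.insertNth_apply_succAbove, hs, mul_add, Finset.sum_add_distrib, hL]
  have h4 : (∑ p, y p * (S j (j.succAbove p) * t)) = t * L := by
    rw [hL, Finset.mul_sum]; apply Finset.sum_congr rfl; intros; ring
  rw [h3, h2, h4, shift, ← hL]
  field_simp
  ring

lemma quad_pos {n : ℕ} {S : Matrix (Fin n) (Fin n) ℝ} (hP : S.PosDef) {x : Fin n → ℝ} (hx : x ≠ 0) : 0 < x ⬝ᵥ S *ᵥ x := by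
  simpa using hP.dotProduct_mulVec_pos hx

lemma schur_symm {n : ℕ} (S : Matrix (Fin (n+1)) (Fin (n+1)) ℝ) (hS : S.IsSymm) (j : Fin (n+1)) :
    (schur S j).IsSymm := by
  ext p q
  simp only [transpose_apply, schur, hS.apply (j.succAbove q) (j.succAbove p), hS.apply j (j.succAbove q), hS.apply j (j.succAbove p)]
  ring

lemma schur_posDef {n : ℕ} (S : Matrix (Fin (n+1)) (Fin (n+1)) ℝ) (hS : S.IsSymm) (hP : S.PosDef) (j : Fin (n+1)) :
    (schur S j).PosDef := by
  have hd : 0 < S j j := hP.diag_pos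
  apply PosDef.of_dotProduct_mulVec_pos
  · have := schur_symm S hS j
    rw [IsHermitian, conjTranspose_eq_transpose_of_trivial]; exact this
  · intro y hy
    have := quad_schur S hS j hd.ne' (shift S j y) y
    simp only [sub_self] at this
    simp only [star_trivial]
    have hne : (j.insertNth (shift S j y) y : Fin (n+1) → ℝ) ≠ 0 := by
      intro h0; apply hy; ext p
      have := congrFun h0 (j.succAbove p); simpa using this
    have h2 := quad_pos hP hne
    rw [this] at h2; simpa using h2

lemma sq_le_sigma {d u : ℝ} (hd : 0 < d) (h : d * u ^ 2 ≤ 1) : |u| ≤ d ^ (-(1/2) : ℝ) := by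
  rw [Real.rpow_neg hd.le, ← Real.sqrt_eq_rpow]
  have hs : 0 < Real.sqrt d := Real.sqrt_pos.2 hd
  rw [← one_div, le_div_iff₀ hs]
  have h2 : (|u| * Real.sqrt d) ^ 2 ≤ 1 := by
    rw [mul_pow, sq_abs, Real.sq_sqrt hd.le]; linarith
  exact (sq_le_one_iff₀ (by positivity)).1 h2

lemma core_zero (b c : ℝ) (hb : 0 ≤ b) (hc : 0 ≤ c) (hbc : b + c ≤ 3/4) :
    ∀ (S : Matrix (Fin 1) (Fin 1) ℝ), S.IsSymm → S.PosDef → ∀ (k : Fin 1) (r : ℝ), 0 < r →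
    ∀ v : Fin 1 → ℝ, v k ≠ 0 → r * (v ⬝ᵥ S *ᵥ v) ≤ v k ^ 2 →
    ∫⁻ x in {x : Fin 1 → ℝ | x ⬝ᵥ S *ᵥ x ≤ 1},
      ENNReal.ofReal (|x k| ^ (-c)) * ∏ i, ENNReal.ofReal (|x i| ^ (-b)) ≤
      ENNReal.ofReal (10 * (S.det ^ (-(1/2) * (1 - b)) * r ^ (-(1/2) * c))) := by
  intro S hS hP k r hr v hv hrv
  have hd : 0 < S 0 0 := hP.diag_pos
  obtain rfl : k = 0 := Subsingleton.elim _ _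
  have hvp : 0 < v 0 ^ 2 := by positivity
  have hSr : S 0 0 ≤ r⁻¹ := by
    simp [dotProduct, mulVec] at hrv
    rw [le_inv_comm₀ hd hr, ← one_div, le_div_iff₀ hd]
    by_contra hcon
    push Not at hcon
    nlinarith
  set σ := (S 0 0) ^ (-(1/2) : ℝ) with hσ
  have hσp : 0 < σ := by positivity
  have hmeas : Measurable fun t : ℝ => ({t : ℝ | |t - 0| ≤ σ}).indicator (fun t => ENNReal.ofReal (|t| ^ (-(b + c)))) t := by
    apply Measurable.indicator (by fun_prop)
    exact measurableSet_le (by fun_prop) (by fun_prop)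
  have hE : MeasurableSet {x : Fin 1 → ℝ | x ⬝ᵥ S *ᵥ x ≤ 1} := by
    apply measurableSet_le _ measurable_const
    unfold dotProduct mulVec dotProduct; fun_prop
  calc _ ≤ ∫⁻ x : Fin 1 → ℝ, ({t : ℝ | |t - 0| ≤ σ}).indicator (fun t => ENNReal.ofReal (|t| ^ (-(b + c)))) (x 0) := by
        rw [← lintegral_indicator hE]
        apply lintegral_mono
        intro x
        simp only [Set.indicator_apply]
        split_ifs with h1 h2
        · rw [← ENNReal.ofReal_prod_of_nonneg (fun i _ => by positivity), ← ENNReal.ofReal_mul (by positivity)]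
          apply ENNReal.ofReal_le_ofReal
          simp only [Finset.univ_unique, Finset.prod_singleton, Fin.default_eq_zero]
          rcases eq_or_ne (x 0) 0 with h0 | h0
          · rw [h0, abs_zero]
            rcases eq_or_ne c 0 with rfl | hc0
            · simp
            · rw [Real.zero_rpow (neg_ne_zero.2 hc0), zero_mul]; positivity
          · rw [← Real.rpow_add (abs_pos.2 h0)]
            apply le_of_eq; congr 1; ring
        · exfalso; apply h2
          simp only [Set.mem_ofPred_eq, sub_zero]
          apply sq_le_sigma hd
          simp [dotProduct, mulVec] at h1
          linarith
        · exact zero_le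
        · exact le_rfl
    _ = ∫⁻ t in {t : ℝ | |t - 0| ≤ σ}, ENNReal.ofReal (|t| ^ (-(b + c))) := by
        rw [← lintegral_indicator (measurableSet_le (by fun_prop) (by fun_prop))]
        exact (volume_preserving_funUnique (Fin 1) ℝ).lintegral_comp hmeas
    _ ≤ _ := one_dim _ σ 0 (by linarith) hbc hσp
    _ ≤ _ := by
        apply ENNReal.ofReal_le_ofReal
        rw [hσ, ← Real.rpow_mul hd.le]
        simp only [det_unique, Fin.default_eq_zero]
        rw [show (-(1/2) * (1 - (b + c)) : ℝ) = -(1/2) * (1 - b) + (1/2) * c by ring, Real.rpow_add hd]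
        gcongr
        rw [neg_mul, Real.rpow_neg hr.le, ← Real.inv_rpow hr.le]
        exact Real.rpow_le_rpow hd.le hSr (by positivity)

lemma core (b c : ℝ) (hb : 0 ≤ b) (hc : 0 ≤ c) (hbc : b + c ≤ 3/4) (n : ℕ) :
    ∀ (S : Matrix (Fin (n+1)) (Fin (n+1)) ℝ), S.IsSymm → S.PosDef → ∀ (k : Fin (n+1)) (r : ℝ), 0 < r →
    ∀ v : Fin (n+1) → ℝ, v k ≠ 0 → r * (v ⬝ᵥ S *ᵥ v) ≤ v k ^ 2 →
    ∫⁻ x in {x : Fin (n+1) → ℝ | x ⬝ᵥ S *ᵥ x ≤ 1},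
      ENNReal.ofReal (|x k| ^ (-c)) * ∏ i, ENNReal.ofReal (|x i| ^ (-b)) ≤
      ENNReal.ofReal (10 ^ (n+1) * (S.det ^ (-(1/2) * (1 - b)) * r ^ (-(1/2) * c))) := by
  induction n with
  | zero =>
    have := core_zero b c hb hc hbc
    simp only [zero_add, pow_one]
    exact this
  | succ n ih =>
    intro S hS hP k r hr v hv hrv
    obtain ⟨j, hj⟩ : ∃ j : Fin (n+2), j ≠ k := exists_ne k
    obtain ⟨k', rfl⟩ := Fin.exists_succAbove_eq hj.symm
    have hd : 0 < S j j := hP.diag_pos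
    have hP' := schur_posDef S hS hP j
    have hS' := schur_symm S hS j
    have hdet' : 0 < (schur S j).det := hP'.det_pos
    set σ := (S j j) ^ (-(1/2) : ℝ) with hσ
    have hσp : 0 < σ := by positivity
    have hrv' : r * ((fun p => v (j.succAbove p)) ⬝ᵥ schur S j *ᵥ (fun p => v (j.succAbove p))) ≤ v (j.succAbove k') ^ 2 := by
      refine le_trans ?_ hrv
      have h1 : v = j.insertNth (v j) (fun p => v (j.succAbove p)) := by
        exact (Fin.insertNth_self_removeNth j v).symm
      conv_rhs => rw [h1]
      rw [quad_schur S hS j hd.ne']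
      gcongr
      have : 0 ≤ S j j * (v j - shift S j fun p => v (j.succAbove p)) ^ 2 := by positivity
      linarith
    have hI := ih (schur S j) hS' hP' k' r hr (fun p => v (j.succAbove p)) hv hrv'
    have hE : ∀ {m : ℕ} (T : Matrix (Fin m) (Fin m) ℝ), MeasurableSet {x : Fin m → ℝ | x ⬝ᵥ T *ᵥ x ≤ 1} := by
      intro m T
      apply measurableSet_le _ measurable_const
      unfold dotProduct mulVec dotProduct; fun_prop
    let F : (Fin (n+2) → ℝ) → ENNReal := ({x | x ⬝ᵥ S *ᵥ x ≤ 1}).indicator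
      fun x => ENNReal.ofReal (|x (j.succAbove k')| ^ (-c)) * ∏ i, ENNReal.ofReal (|x i| ^ (-b))
    have hF : Measurable F := by
      apply Measurable.indicator _ (hE S)
      fun_prop
    let G : (Fin (n+1) → ℝ) → ENNReal := ({x | x ⬝ᵥ schur S j *ᵥ x ≤ 1}).indicator
      fun x => ENNReal.ofReal (|x k'| ^ (-c)) * ∏ i, ENNReal.ofReal (|x i| ^ (-b))
    have hG : Measurable G := by
      apply Measurable.indicator _ (hE _)
      fun_prop
    have hmp := (volume_preserving_piFinSuccAbove (fun _ : Fin (n+2) => ℝ) j).symm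
    have hkey : ∀ (t : ℝ) (y : Fin (n+1) → ℝ), F (j.insertNth t y) ≤
        ({t : ℝ | |t - shift S j y| ≤ σ}).indicator (fun t => ENNReal.ofReal (|t| ^ (-b))) t * G y := by
      intro t y
      by_cases h : (j.insertNth t y : Fin (n+2) → ℝ) ⬝ᵥ S *ᵥ (j.insertNth t y : Fin (n+2) → ℝ) ≤ 1
      · have h' := h
        rw [quad_schur S hS j hd.ne'] at h'
        have h0 : 0 ≤ y ⬝ᵥ schur S j *ᵥ y := by
          simpa using hP'.posSemidef.dotProduct_mulVec_nonneg y
        have h00 : 0 ≤ S j j * (t - shift S j y) ^ 2 := by positivity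
        have h1 : y ∈ {x | x ⬝ᵥ schur S j *ᵥ x ≤ 1} := by
          change y ⬝ᵥ schur S j *ᵥ y ≤ 1; linarith
        have h2 : t ∈ {t : ℝ | |t - shift S j y| ≤ σ} := sq_le_sigma hd (by linarith)
        have h3 : (j.insertNth t y : Fin (n+2) → ℝ) ∈ {x : Fin (n+2) → ℝ | x ⬝ᵥ S *ᵥ x ≤ 1} := h
        simp only [F, G]
        rw [Set.indicator_of_mem h1, Set.indicator_of_mem h2, Set.indicator_of_mem h3]
        rw [Fin.prod_univ_succAbove _ j]
        simp only [Fin.insertNth_apply_same, Fin.insertNth_apply_succAbove]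
        apply le_of_eq; ring
      · simp only [F]
        rw [Set.indicator_of_notMem (by exact h)]
        exact zero_le
    calc _ = ∫⁻ x, F x := (lintegral_indicator (hE S) _).symm
      _ = ∫⁻ p : ℝ × (Fin (n+1) → ℝ), F (j.insertNth p.1 p.2) := (hmp.lintegral_comp hF).symm
      _ = ∫⁻ y : Fin (n+1) → ℝ, ∫⁻ t : ℝ, F (j.insertNth t y) := by
          have := lintegral_prod_symm (μ := (volume : Measure ℝ)) (ν := (volume : Measure (Fin (n+1) → ℝ))) (fun p : ℝ × (Fin (n+1) → ℝ) => F (j.insertNth p.1 p.2)) (hF.comp hmp.measurable).aemeasurable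
          exact this
      _ ≤ ∫⁻ y : Fin (n+1) → ℝ, ENNReal.ofReal (10 * σ ^ (1 - b)) * G y := by
          apply lintegral_mono
          intro y
          refine (lintegral_mono (fun t => hkey t y)).trans ?_
          have hms : MeasurableSet {t : ℝ | |t - shift S j y| ≤ σ} := measurableSet_le (by fun_prop) (by fun_prop)
          rw [lintegral_mul_const _ (Measurable.indicator (by fun_prop) hms), lintegral_indicator hms]
          exact mul_le_mul' (one_dim b σ _ hb (by linarith) hσp) le_rfl
      _ = ENNReal.ofReal (10 * σ ^ (1 - b)) * ∫⁻ y in {x | x ⬝ᵥ schur S j *ᵥ x ≤ 1}, (ENNReal.ofReal (|y k'| ^ (-c)) * ∏ i, ENNReal.ofReal (|y i| ^ (-b))) := by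
          rw [lintegral_const_mul _ hG, lintegral_indicator (hE _)]
      _ ≤ ENNReal.ofReal (10 * σ ^ (1 - b)) * _ := mul_le_mul' le_rfl hI
      _ = _ := by
          rw [← ENNReal.ofReal_mul (by positivity), det_schur S j hd.ne', Real.mul_rpow hd.le hdet'.le, hσ, ← Real.rpow_mul hd.le]
          congr 1; ring

lemma amgm (n : ℕ) (hn : 1 ≤ n) (ε b c : ℝ) (hc : c = n * ε) (hb : b + ε = 1/2)
    (R x : Fin n → ℝ) (hR : ∀ i, 0 < R i) :
    ∏ i, |x i| ^ (-(1/2) : ℝ) ≤ ∑ k, ((∏ i, R i ^ (-(1/2) * ε)) * (1 / n) * R k ^ (1/2 * c)) *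
      (|x k| ^ (-c) * ∏ i, |x i| ^ (-b)) := by
  have hRn : ∀ (i : Fin n) (s : ℝ), 0 ≤ R i ^ s := fun i s => (Real.rpow_pos_of_pos (hR i) s).le
  have hA : 0 ≤ ∏ i, R i ^ (-(1/2) * ε) := Finset.prod_nonneg fun i _ => hRn i _
  have hn0 : (n : ℝ) ≠ 0 := by positivity
  by_cases h : ∃ i, x i = 0
  · obtain ⟨i, hi⟩ := h
    rw [Finset.prod_eq_zero (Finset.mem_univ i) (by rw [hi, abs_zero, Real.zero_rpow (by norm_num)])]
    apply Finset.sum_nonneg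
    intro k _
    have := hRn k (1/2 * c)
    have h2 : 0 ≤ ∏ i, |x i| ^ (-b) := Finset.prod_nonneg fun i _ => by positivity
    positivity
  · push Not at h
    have hu : ∀ i, 0 < |x i| := fun i => abs_pos.2 (h i)
    have hg := Real.geom_mean_le_arith_mean_weighted Finset.univ (fun _ : Fin n => (1 / n : ℝ))
      (fun k => R k ^ (1/2 * c) * |x k| ^ (-c)) (fun _ _ => by positivity) (by simp [hn0])
      (fun k _ => mul_nonneg (hRn k _) (by positivity))
    have e1 : ∏ i, |x i| ^ (-(1/2) : ℝ) = (∏ i, R i ^ (-(1/2) * ε)) * (∏ i, |x i| ^ (-b)) *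
        ∏ k, (R k ^ (1/2 * c) * |x k| ^ (-c)) ^ (1 / n : ℝ) := by
      rw [← Finset.prod_mul_distrib, ← Finset.prod_mul_distrib]
      apply Finset.prod_congr rfl
      intro i _
      rw [Real.mul_rpow (hRn i _) (by positivity), ← Real.rpow_mul (hR i).le, ← Real.rpow_mul (hu i).le]
      have q1 : 1 / 2 * c * (1 / n) = 1/2 * ε := by rw [hc]; field_simp
      have q2 : -c * (1 / n) = -ε := by rw [hc]; field_simp
      rw [q1, q2]
      have q3 : R i ^ (-(1/2) * ε) * R i ^ (1/2 * ε) = 1 := by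
        rw [← Real.rpow_add (hR i)]; ring_nf; simp
      have q4 : |x i| ^ (-(1/2) : ℝ) = |x i| ^ (-b) * |x i| ^ (-ε) := by
        rw [← Real.rpow_add (hu i)]; congr 1; linarith
      rw [q4]
      calc _ = (R i ^ (-(1/2) * ε) * R i ^ (1/2 * ε)) * (|x i| ^ (-b) * |x i| ^ (-ε)) := by rw [q3, one_mul]
        _ = _ := by ring
    rw [e1]
    refine (mul_le_mul_of_nonneg_left hg (mul_nonneg hA (Finset.prod_nonneg fun i _ => by positivity))).trans (le_of_eq ?_)
    rw [Finset.mul_sum]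
    apply Finset.sum_congr rfl
    intro k _; ring

lemma quad_inv (n : ℕ) (S : Matrix (Fin n) (Fin n) ℝ) (hP : S.PosDef) (k : Fin n) :
    S *ᵥ (fun i => S⁻¹ i k) = Pi.single k 1 := by
  have hu : IsUnit S.det := (isUnit_iff_isUnit_det S).1 hP.isUnit
  have h : (S * S⁻¹) = 1 := mul_nonsing_inv S hu
  ext i
  have := congrFun (congrFun h i) k
  rw [Matrix.one_apply] at this
  rw [Pi.single_apply, ← this]
  rfl

lemma cauchy_inv (n : ℕ) (S : Matrix (Fin n) (Fin n) ℝ) (hS : S.IsSymm) (hP : S.PosDef) (k : Fin n) (x : Fin n → ℝ) :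
    x k ^ 2 ≤ S⁻¹ k k * (x ⬝ᵥ S *ᵥ x) := by
  have hr : 0 < S⁻¹ k k := hP.inv.diag_pos
  set v : Fin n → ℝ := fun i => S⁻¹ i k with hv
  have hSv : S *ᵥ v = Pi.single k 1 := quad_inv n S hP k
  set t := x k / S⁻¹ k k with ht
  have h0 : 0 ≤ (x - t • v) ⬝ᵥ S *ᵥ (x - t • v) := by
    simpa using hP.posSemidef.dotProduct_mulVec_nonneg (x - t • v)
  have hsw : v ⬝ᵥ S *ᵥ x = x k := by
    rw [dotProduct_mulVec, ← mulVec_transpose, hS.eq, hSv]; simp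
  have e : (x - t • v) ⬝ᵥ S *ᵥ (x - t • v) = x ⬝ᵥ S *ᵥ x - 2 * t * x k + t ^ 2 * S⁻¹ k k := by
    have hvk : v k = S⁻¹ k k := rfl
    rw [mulVec_sub, mulVec_smul, sub_dotProduct, dotProduct_sub, dotProduct_sub, smul_dotProduct, smul_dotProduct,
      dotProduct_smul, dotProduct_smul, hsw, hSv]
    simp only [dotProduct_single, smul_eq_mul, hvk]
    ring
  rw [e] at h0
  have : t * S⁻¹ k k = x k := by rw [ht]; field_simp
  have h2 : 0 ≤ S⁻¹ k k * (x ⬝ᵥ S *ᵥ x - 2 * t * x k + t ^ 2 * S⁻¹ k k) := by positivity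
  nlinarith

lemma lint_bound (n : ℕ) (hn : 1 ≤ n) (S : Matrix (Fin n) (Fin n) ℝ) (hS : S.IsSymm) (hP : S.PosDef)
    (ε b c : ℝ) (hc0 : 0 ≤ c) (hb0 : 0 ≤ b) (hbc : b + c ≤ 3/4) (hc : c = n * ε) (hb : b + ε = 1/2) :
    ∫⁻ x in {x : Fin n → ℝ | x ⬝ᵥ S *ᵥ x ≤ 1}, ENNReal.ofReal (∏ i, |x i| ^ (-(1/2) : ℝ)) ≤
      ENNReal.ofReal (10 ^ n * ((∏ i, S⁻¹ i i ^ (-(1/2) * ε)) * S.det ^ (-(1/2) * (1 - b)))) := by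
  have hdet : 0 < S.det := hP.det_pos
  have hR : ∀ i, 0 < S⁻¹ i i := fun i => hP.inv.diag_pos
  have hRn : ∀ (i : Fin n) (s : ℝ), 0 ≤ S⁻¹ i i ^ s := fun i s => (Real.rpow_pos_of_pos (hR i) s).le
  have hA : 0 ≤ ∏ i, S⁻¹ i i ^ (-(1/2) * ε) := Finset.prod_nonneg fun i _ => hRn i _
  have hn0 : (n : ℝ) ≠ 0 := by positivity
  have hcore : ∀ k, ∫⁻ x in {x : Fin n → ℝ | x ⬝ᵥ S *ᵥ x ≤ 1},
      ENNReal.ofReal (|x k| ^ (-c)) * ∏ i, ENNReal.ofReal (|x i| ^ (-b)) ≤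
      ENNReal.ofReal (10 ^ n * (S.det ^ (-(1/2) * (1 - b)) * S⁻¹ k k ^ (-(1/2) * c))) := by
    obtain ⟨m, rfl⟩ : ∃ m, n = m + 1 := ⟨n - 1, by omega⟩
    intro k
    apply core b c hb0 hc0 hbc m S hS hP k _ (hR k) (fun i => S⁻¹ i k) (hR k).ne'
    rw [quad_inv _ S hP k]
    simp [sq]
  have hco : ∀ k, 0 ≤ ((∏ i, S⁻¹ i i ^ (-(1/2) * ε)) * (1 / n) * S⁻¹ k k ^ (1/2 * c)) := fun k =>
    mul_nonneg (mul_nonneg hA (by positivity)) (hRn k _)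
  calc _ ≤ ∫⁻ x in {x : Fin n → ℝ | x ⬝ᵥ S *ᵥ x ≤ 1}, ∑ k,
        ENNReal.ofReal ((∏ i, S⁻¹ i i ^ (-(1/2) * ε)) * (1 / n) * S⁻¹ k k ^ (1/2 * c)) *
        (ENNReal.ofReal (|x k| ^ (-c)) * ∏ i, ENNReal.ofReal (|x i| ^ (-b))) := by
        apply lintegral_mono
        intro x
        refine (ENNReal.ofReal_le_ofReal (amgm n hn ε b c hc hb (fun i => S⁻¹ i i) x hR)).trans (le_of_eq ?_)
        have hp : 0 ≤ ∏ i, |x i| ^ (-b) := Finset.prod_nonneg fun i _ => by positivity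
        rw [ENNReal.ofReal_sum_of_nonneg (fun k _ => mul_nonneg (hco k) (by positivity))]
        apply Finset.sum_congr rfl
        intro k _
        rw [ENNReal.ofReal_mul (hco k), ENNReal.ofReal_mul (p := |x k| ^ (-c)) (by positivity), ENNReal.ofReal_prod_of_nonneg (fun i _ => by positivity)]
    _ = ∑ k, ENNReal.ofReal ((∏ i, S⁻¹ i i ^ (-(1/2) * ε)) * (1 / n) * S⁻¹ k k ^ (1/2 * c)) *
        ∫⁻ x in {x : Fin n → ℝ | x ⬝ᵥ S *ᵥ x ≤ 1}, (ENNReal.ofReal (|x k| ^ (-c)) * ∏ i, ENNReal.ofReal (|x i| ^ (-b))) := by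
        rw [lintegral_finsetSum _ (fun k _ => by fun_prop)]
        apply Finset.sum_congr rfl
        intro k _
        rw [lintegral_const_mul _ (by fun_prop)]
    _ ≤ ∑ k, ENNReal.ofReal ((∏ i, S⁻¹ i i ^ (-(1/2) * ε)) * (1 / n) * S⁻¹ k k ^ (1/2 * c)) * _ :=
        Finset.sum_le_sum fun k _ => mul_le_mul' le_rfl (hcore k)
    _ = ∑ k : Fin n, ENNReal.ofReal ((1 / n) * (10 ^ n * ((∏ i, S⁻¹ i i ^ (-(1/2) * ε)) * S.det ^ (-(1/2) * (1 - b))))) := by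
        apply Finset.sum_congr rfl
        intro k _
        rw [← ENNReal.ofReal_mul (hco k)]
        congr 1
        have q : S⁻¹ k k ^ (1/2 * c) * S⁻¹ k k ^ (-(1/2) * c) = 1 := by
          rw [← Real.rpow_add (hR k)]; ring_nf; simp
        calc _ = ((1 / n) * (10 ^ n * ((∏ i, S⁻¹ i i ^ (-(1/2) * ε)) * S.det ^ (-(1/2) * (1 - b))))) * (S⁻¹ k k ^ (1/2 * c) * S⁻¹ k k ^ (-(1/2) * c)) := by ring
          _ = _ := by rw [q, mul_one]
    _ = _ := by
        have := Real.rpow_pos_of_pos hdet (-(1/2) * (1 - b))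
        rw [← ENNReal.ofReal_sum_of_nonneg (fun k _ => by positivity)]
        congr 1
        simp only [Finset.sum_const, Finset.card_univ, Fintype.card_fin, nsmul_eq_mul]
        field_simp

lemma exists_sqrt {n : ℕ} (S : Matrix (Fin n) (Fin n) ℝ) (hP : S.PosSemidef) : ∃ B : Matrix (Fin n) (Fin n) ℝ, S = Bᵀ * B := by
  open scoped MatrixOrder in
  obtain ⟨B, hB⟩ := CStarAlgebra.nonneg_iff_eq_star_mul_self.mp hP.nonneg
  exact ⟨B, by rw [hB, star_eq_conjTranspose, conjTranspose_eq_transpose_of_trivial]⟩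

lemma quad_sqrt {n : ℕ} (B : Matrix (Fin n) (Fin n) ℝ) (x : Fin n → ℝ) :
    x ⬝ᵥ (Bᵀ * B) *ᵥ x = (B *ᵥ x) ⬝ᵥ (B *ᵥ x) := by
  rw [← mulVec_mulVec, dotProduct_mulVec, vecMul_transpose]

lemma vol_eq {n : ℕ} (S : Matrix (Fin n) (Fin n) ℝ) (hP : S.PosDef) :
    (volume {x : Fin n → ℝ | x ⬝ᵥ S *ᵥ x ≤ 1}).toReal = S.det ^ (-(1/2) : ℝ) * (volume {x : Fin n → ℝ | x ⬝ᵥ x ≤ 1}).toReal := by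
  obtain ⟨B, rfl⟩ := exists_sqrt S hP.posSemidef
  have hd : 0 < (Bᵀ * B).det := hP.det_pos
  rw [det_mul, det_transpose] at hd
  have hB : B.det ≠ 0 := by rintro h; simp [h] at hd
  have : {x : Fin n → ℝ | x ⬝ᵥ (Bᵀ * B) *ᵥ x ≤ 1} = (toLin' B) ⁻¹' {x : Fin n → ℝ | x ⬝ᵥ x ≤ 1} := by
    ext x; simp [quad_sqrt]
  rw [this, Measure.addHaar_preimage_linearMap _ (by simpa using hB), ENNReal.toReal_mul, ENNReal.toReal_ofReal (abs_nonneg _)]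
  congr 1
  rw [LinearMap.det_toLin', abs_inv, det_mul, det_transpose, Real.rpow_neg hd.le, ← Real.sqrt_eq_rpow, Real.sqrt_mul_self_eq_abs]

lemma ball_pos (n : ℕ) : 0 < (volume {x : Fin n → ℝ | x ⬝ᵥ x ≤ 1}).toReal := by
  apply ENNReal.toReal_pos
  · have ho : IsOpen {x : Fin n → ℝ | x ⬝ᵥ x < 1} := by
      apply isOpen_lt _ continuous_const
      unfold dotProduct; fun_prop
    have h1 := ho.measure_pos volume ⟨0, by simp⟩
    exact (h1.trans_le (measure_mono fun x (hx : x ⬝ᵥ x < 1) => (hx.le : x ⬝ᵥ x ≤ 1))).ne'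
  · refine ((measure_mono ?_).trans_lt (isCompact_Icc (a := (fun _ => -1 : Fin n → ℝ)) (b := fun _ => 1)).measure_lt_top).ne
    intro x hx
    have hx' : ∑ i, x i * x i ≤ 1 := hx
    have : ∀ i, |x i| ≤ 1 := by
      intro i
      have := Finset.single_le_sum (f := fun i => x i * x i) (fun i _ => mul_self_nonneg _) (Finset.mem_univ i)
      rw [← sq_le_one_iff_abs_le_one]
      nlinarith
    exact ⟨fun i => (abs_le.1 (this i)).1, fun i => (abs_le.1 (this i)).2⟩

lemma log_ratio_nonneg (A : Set ℝ) (hA : A.Nonempty) (h0 : ∀ q ∈ A, 0 ≤ q) : 0 ≤ Real.log (sSup A / sInf A) := by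
  have hi : 0 ≤ sInf A := le_csInf hA h0
  rcases hi.eq_or_lt with h | h
  · rw [← h]; simp
  · by_cases hb : BddAbove A
    · apply Real.log_nonneg
      rw [le_div_iff₀ h, one_mul]
      exact csInf_le_csSup hA ⟨0, h0⟩ hb
    · rw [Real.sSup_of_not_bddAbove hb]; simp

lemma quad_le_trace {n : ℕ} (T : Matrix (Fin n) (Fin n) ℝ) (hT : T.PosSemidef) (x : Fin n → ℝ) (hx : ∑ i, x i ^ 2 = 1) :
    x ⬝ᵥ T *ᵥ x ≤ T.trace := by
  obtain ⟨B, rfl⟩ := exists_sqrt T hT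
  rw [quad_sqrt]
  have h1 : (Bᵀ * B).trace = ∑ i, ∑ j, B i j ^ 2 := by
    rw [Finset.sum_comm]
    simp [trace, mul_apply, sq]
  rw [h1]
  simp only [dotProduct]
  apply Finset.sum_le_sum
  intro i _
  have := Finset.sum_mul_sq_le_sq_mul_sq Finset.univ (fun j => B i j) x
  rw [hx, mul_one] at this
  simpa [mulVec, dotProduct, sq] using this

lemma trace_le {n : ℕ} (T : Matrix (Fin n) (Fin n) ℝ) (hT : T.PosDef)
    (h : ∀ x : Fin n → ℝ, ∑ i, x i ^ 2 = 1 → 1 ≤ n * (x ⬝ᵥ T *ᵥ x)) : T.trace ≤ n * (n ^ n * T.det) := by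
  have hH := hT.isHermitian
  have hl : ∀ i, 1 ≤ n * hH.eigenvalues i := by
    intro i
    rw [hH.eigenvalues_eq]
    have h1 := h (hH.eigenvectorBasis i) (by
      have := hH.eigenvectorBasis.orthonormal.1 i
      have h2 := EuclideanSpace.real_norm_sq_eq (hH.eigenvectorBasis i)
      rw [this] at h2; simpa using h2.symm)
    simpa using h1
  rw [hH.trace_eq_sum_eigenvalues, hH.det_eq_prod_eigenvalues]
  have hp : (n:ℝ) ^ n * ∏ i, hH.eigenvalues i = ∏ i, (n * hH.eigenvalues i) := by
    rw [Finset.prod_mul_distrib]; simp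
  simp only [RCLike.ofReal_real_eq_id, id]
  rw [hp]
  have hj : ∀ j, hH.eigenvalues j ≤ ∏ i, (n * hH.eigenvalues i) := by
    intro j
    have hnj : (1:ℝ) ≤ n := by
      have : 0 < n := j.pos
      exact_mod_cast this
    have hpos := hT.eigenvalues_pos j
    rw [← Finset.mul_prod_erase _ _ (Finset.mem_univ j)]
    have : 1 ≤ ∏ i ∈ Finset.univ.erase j, (n * hH.eigenvalues i) := by
      have := Finset.prod_le_prod (s := Finset.univ.erase j) (f := fun _ => (1:ℝ)) (fun _ _ => zero_le_one) (fun i _ => hl i)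
      simpa using this
    nlinarith [hl j]
  refine (Finset.sum_le_sum fun j _ => hj j).trans ?_
  simp

lemma delta_bound (n : ℕ) (hn : 1 ≤ n) (S : Matrix (Fin n) (Fin n) ℝ) (hS : S.IsSymm) (hP : S.PosDef) :
    sInf {t : ℝ | ∃ d : Fin n → ℝ, (∀ i, d i ≠ 0) ∧
              t = Real.log (
                sSup {q : ℝ | ∃ x : Fin n → ℝ, (∑ i, (x i) ^ 2) = 1 ∧
                  q = (fun i => d i * x i) ⬝ᵥ S.mulVec (fun i => d i * x i)} /
                sInf {q : ℝ | ∃ x : Fin n → ℝ, (∑ i, (x i) ^ 2) = 1 ∧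
                  q = (fun i => d i * x i) ⬝ᵥ S.mulVec (fun i => d i * x i)})} ≤
    Real.log ((n:ℝ) ^ (n + 2) * (S.det * ∏ i, S⁻¹ i i)) := by
  have hdet : 0 < S.det := hP.det_pos
  have hR : ∀ i, 0 < S⁻¹ i i := fun i => hP.inv.diag_pos
  have hnp : (0:ℝ) < n := by exact_mod_cast hn
  have hne : ∀ d : Fin n → ℝ, {q : ℝ | ∃ x : Fin n → ℝ, (∑ i, (x i) ^ 2) = 1 ∧
                  q = (fun i => d i * x i) ⬝ᵥ S.mulVec (fun i => d i * x i)}.Nonempty := by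
    intro d
    refine ⟨_, Pi.single ⟨0, hn⟩ 1, ?_, rfl⟩
    simp [Pi.single_apply]
  let d : Fin n → ℝ := fun i => Real.sqrt (S⁻¹ i i)
  have hd : ∀ i, 0 < d i := fun i => Real.sqrt_pos.2 (hR i)
  have hd2 : ∀ i, d i * d i = S⁻¹ i i := fun i => Real.mul_self_sqrt (hR i).le
  let T : Matrix (Fin n) (Fin n) ℝ := diagonal d * S * diagonal d
  have hTq : ∀ x : Fin n → ℝ, x ⬝ᵥ T *ᵥ x = (fun i => d i * x i) ⬝ᵥ S.mulVec (fun i => d i * x i) := by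
    intro x
    have h1 : diagonal d *ᵥ x = fun i => d i * x i := by ext i; simp [mulVec_diagonal]
    have h2 : x ᵥ* diagonal d = fun i => d i * x i := by ext i; simp [vecMul_diagonal, mul_comm]
    simp only [T]
    rw [← mulVec_mulVec, ← mulVec_mulVec, h1, dotProduct_mulVec, h2]
  have hTp : T.PosDef := by
    apply PosDef.of_dotProduct_mulVec_pos
    · rw [IsHermitian, conjTranspose_eq_transpose_of_trivial]
      simp only [T, transpose_mul, diagonal_transpose, hS.eq, Matrix.mul_assoc]
    · intro x hx
      rw [star_trivial, hTq]
      apply quad_pos hP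
      intro h0; apply hx; ext i
      have := congrFun h0 i
      simpa [(hd i).ne'] using this
  have hTd : T.det = S.det * ∏ i, S⁻¹ i i := by
    simp only [T, det_mul, det_diagonal]
    rw [← Finset.prod_congr rfl (fun i _ => hd2 i), Finset.prod_mul_distrib]; ring
  have hlow : ∀ x : Fin n → ℝ, ∑ i, x i ^ 2 = 1 → 1 ≤ n * (x ⬝ᵥ T *ᵥ x) := by
    intro x hx
    rw [hTq, ← hx]
    have : ∀ i ∈ Finset.univ, x i ^ 2 ≤ (fun i => d i * x i) ⬝ᵥ S.mulVec (fun i => d i * x i) := by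
      intro i _
      have h := cauchy_inv n S hS hP i (fun i => d i * x i)
      simp only [mul_pow] at h
      rw [sq (d i), hd2] at h
      exact le_of_mul_le_mul_left h (hR i)
    refine (Finset.sum_le_sum this).trans ?_
    simp
  have htr := trace_le T hTp hlow
  rw [hTd] at htr
  set M := (n:ℝ) * (n ^ n * (S.det * ∏ i, S⁻¹ i i)) with hM
  set A := {q : ℝ | ∃ x : Fin n → ℝ, (∑ i, (x i) ^ 2) = 1 ∧
                  q = (fun i => d i * x i) ⬝ᵥ S.mulVec (fun i => d i * x i)} with hAdef
  have hA1 : ∀ q ∈ A, q ≤ M := by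
    rintro q ⟨x, hx, rfl⟩
    rw [← hTq]
    exact (quad_le_trace T hTp.posSemidef x hx).trans htr
  have hA2 : ∀ q ∈ A, 1 / n ≤ q := by
    rintro q ⟨x, hx, rfl⟩
    rw [← hTq, div_le_iff₀ hnp, mul_comm]
    exact hlow x hx
  have hAne : A.Nonempty := hne d
  have hs := csSup_le hAne hA1
  have hi := le_csInf hAne hA2
  have hip : 0 < sInf A := lt_of_lt_of_le (by positivity) hi
  have hsp : 0 < sSup A := hip.trans_le (csInf_le_csSup hAne ⟨_, hA2⟩ ⟨_, hA1⟩)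
  calc _ ≤ Real.log (sSup A / sInf A) := by
        apply csInf_le
        · refine ⟨0, ?_⟩
          rintro t ⟨d', -, rfl⟩
          apply log_ratio_nonneg _ (hne d')
          rintro q ⟨x, -, rfl⟩
          simpa using hP.posSemidef.dotProduct_mulVec_nonneg (fun i => d' i * x i)
        · exact ⟨d, fun i => (hd i).ne', rfl⟩
    _ ≤ _ := by
        apply Real.log_le_log (div_pos hsp hip)
        rw [div_le_iff₀ hip]
        calc sSup A ≤ M := hs
          _ = (n:ℝ) ^ (n + 2) * (S.det * ∏ i, S⁻¹ i i) * (1 / n) := by rw [hM]; field_simp; ring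
          _ ≤ _ := by
            have := Finset.prod_pos (s := Finset.univ) (fun i _ => hR i)
            gcongr

/-- For each `n ≥ 1` there are `C > 0` and `δ > 0` such that for every positive
definite quadratic form `Q(x) = xᵀ S x` on `ℝⁿ`,
`∫_{Q ≤ 1} ∏ |x_i|^{-1/2} dx ≤ C · exp(−δ·Δ(Q)) · vol{Q ≤ 1}^{1/2}`,
where `Δ(Q)` is the infimum over invertible diagonal matrices `D` of
`log (sup_{‖x‖=1} Q(Dx) / inf_{‖x‖=1} Q(Dx))`. -/
theorem integral_bound_posdef_quadratic_form (n : ℕ) (hn : 1 ≤ n) :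
    ∃ C : ℝ, 0 < C ∧ ∃ δ : ℝ, 0 < δ ∧
      ∀ S : Matrix (Fin n) (Fin n) ℝ, S.IsSymm → S.PosDef →
        (∫ x in {x : Fin n → ℝ | x ⬝ᵥ S.mulVec x ≤ 1}, ∏ i, |x i| ^ (-(1/2) : ℝ)) ≤
          C *
          Real.exp (-δ *
            sInf {t : ℝ | ∃ d : Fin n → ℝ, (∀ i, d i ≠ 0) ∧
              t = Real.log (
                sSup {q : ℝ | ∃ x : Fin n → ℝ, (∑ i, (x i) ^ 2) = 1 ∧
                  q = (fun i => d i * x i) ⬝ᵥ S.mulVec (fun i => d i * x i)} /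
                sInf {q : ℝ | ∃ x : Fin n → ℝ, (∑ i, (x i) ^ 2) = 1 ∧
                  q = (fun i => d i * x i) ⬝ᵥ S.mulVec (fun i => d i * x i)})}) *
          Real.sqrt (volume {x : Fin n → ℝ | x ⬝ᵥ S.mulVec x ≤ 1}).toReal := by
  have hnp : (0:ℝ) < n := by exact_mod_cast hn
  have hn1 : (1:ℝ) ≤ n := by exact_mod_cast hn
  set ε : ℝ := 1 / (4 * n) with hε
  have hεp : 0 < ε := by positivity
  have hε4 : ε ≤ 1/4 := by
    rw [hε, div_le_div_iff₀ (by positivity) (by norm_num)]; linarith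
  set ω := (volume {x : Fin n → ℝ | x ⬝ᵥ x ≤ 1}).toReal with hω
  have hωp : 0 < ω := ball_pos n
  set N : ℝ := (n:ℝ) ^ (n + 2) with hN
  have hNp : 0 < N := by positivity
  refine ⟨10 ^ n * N ^ (1/2 * ε) / Real.sqrt ω, by positivity, 1/2 * ε, by positivity, ?_⟩
  intro S hS hP
  have hdet : 0 < S.det := hP.det_pos
  have hR : ∀ i, 0 < S⁻¹ i i := fun i => hP.inv.diag_pos
  have hRp : 0 < ∏ i, S⁻¹ i i := Finset.prod_pos (fun i _ => hR i)
  have hΔ := delta_bound n hn S hS hP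
  rw [← hN] at hΔ
  set Δ : ℝ := sInf _ with hΔd
  have hb := lint_bound n hn S hS hP ε (1/2 - ε) (1/4) (by norm_num) (by linarith) (by linarith)
    (by rw [hε]; field_simp) (by ring)
  have hpe : (∏ i, S⁻¹ i i ^ (-(1/2) * ε)) = (∏ i, S⁻¹ i i) ^ (-(1/2) * ε) :=
    Real.finsetProd_rpow _ _ (fun i _ => (hR i).le) _
  rw [hpe] at hb
  set P := ∏ i, S⁻¹ i i with hPd
  have hI : (∫ x in {x : Fin n → ℝ | x ⬝ᵥ S.mulVec x ≤ 1}, ∏ i, |x i| ^ (-(1/2) : ℝ)) ≤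
      10 ^ n * (P ^ (-(1/2) * ε) * S.det ^ (-(1/2) * (1 - (1/2 - ε)))) := by
    rw [integral_eq_lintegral_of_nonneg_ae (Filter.Eventually.of_forall fun x => Finset.prod_nonneg fun i _ => by positivity)
      (Measurable.aestronglyMeasurable (by fun_prop))]
    exact ENNReal.toReal_le_of_le_ofReal (by positivity) hb
  refine hI.trans ?_
  rw [vol_eq S hP, ← hω, Real.sqrt_mul (by positivity), Real.sqrt_eq_rpow (S.det ^ _), ← Real.rpow_mul hdet.le]
  have e1 : Real.exp (-(1/2 * ε) * Real.log (N * (S.det * P))) ≤ Real.exp (-(1/2 * ε) * Δ) := by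
    apply Real.exp_le_exp.2
    nlinarith
  have e2 : Real.exp (-(1/2 * ε) * Real.log (N * (S.det * P))) = N ^ (-(1/2 * ε)) * (S.det ^ (-(1/2 * ε)) * P ^ (-(1/2 * ε))) := by
    rw [mul_comm, ← Real.rpow_def_of_pos (by positivity), Real.mul_rpow hNp.le (by positivity), Real.mul_rpow hdet.le hRp.le]
  have e3 : N ^ (1/2 * ε) * N ^ (-(1/2 * ε)) = 1 := by
    rw [← Real.rpow_add hNp]; simp
  have e4 : S.det ^ (-(1/2) * (1 - (1/2 - ε))) = S.det ^ (-(1/2 * ε)) * S.det ^ (-(1/2) * (1/2) : ℝ) := by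
    rw [← Real.rpow_add hdet]; congr 1; ring
  have hsω : 0 < Real.sqrt ω := Real.sqrt_pos.2 hωp
  calc 10 ^ n * (P ^ (-(1/2) * ε) * S.det ^ (-(1/2) * (1 - (1/2 - ε))))
      = 10 ^ n * N ^ (1/2 * ε) / Real.sqrt ω * (N ^ (-(1/2 * ε)) * (S.det ^ (-(1/2 * ε)) * P ^ (-(1/2 * ε)))) *
          (S.det ^ (-(1/2) * (1/2) : ℝ) * Real.sqrt ω) := by
        rw [e4, neg_mul]
        calc _ = 10 ^ n * (N ^ (1/2 * ε) * N ^ (-(1/2 * ε))) * (P ^ (-(1/2 * ε)) * (S.det ^ (-(1/2 * ε)) * S.det ^ (-(1/2 * (1/2)) : ℝ))) := by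
              rw [e3, neg_mul]; ring
          _ = _ := by field_simp
    _ ≤ _ := by
        rw [← e2]
        gcongr
end

section
/- Let k be a nontrivially normed field, V a nonzero finite-dimensional k-vector space, and let N₁, N₂ : V → ℝ be norms on V, i.e. N_j(v) = 0 if and only if v = 0, N_j(λv) = ‖λ‖·N_j(v) for λ ∈ k, and N_j(v+w) ≤ N_j(v) + N_j(w). Assume there exist c₀ > 0 and α₀ ≥ 1 with α₀⁻¹·N₁(v) ≤ c₀·N₂(v) ≤ α₀·N₁(v) for all v. Then ( inf { α ≥ 1 : ∃ c > 0, ∀ v ∈ V, α⁻¹·N₁(v) ≤ c·N₂(v) ≤ α·N₁(v) } )² = sup { ( N₁(v₁)·N₂(v₂) ) / ( N₂(v₁)·N₁(v₂) ) : v₁, v₂ ∈ V, v₁ ≠ 0, v₂ ≠ 0 }. -/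
theorem norm_pos_aux (k : Type*) {V : Type*} [NontriviallyNormedField k] [AddCommGroup V] [Module k V]
    (N : V → ℝ) (hz : ∀ v, N v = 0 ↔ v = 0)
    (hs : ∀ (c : k) (v : V), N (c • v) = ‖c‖ * N v)
    (ha : ∀ v w, N (v + w) ≤ N v + N w) (v : V) (hv : v ≠ 0) : 0 < N v := by
  have h1 := ha v ((-1 : k) • v)
  rw [hs, neg_smul, one_smul, add_neg_cancel, (hz 0).2 rfl, norm_neg, norm_one] at h1
  have h2 : N v ≠ 0 := fun h => hv ((hz v).1 h)
  exact lt_of_le_of_ne (by linarith) h2.symm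

/-- The distance between homothety classes of two norms on a nonzero
finite-dimensional vector space over a nontrivially normed field: the square of
the least `α ≥ 1` such that `α⁻¹ N₁ ≤ c N₂ ≤ α N₁` for some rescaling `c > 0`
equals the supremum of the cross-ratios `N₁(v₁)N₂(v₂) / (N₂(v₁)N₁(v₂))`. -/
theorem dist_of_norm_classes_eq_sup_cross_ratio
    (k V : Type*) [NontriviallyNormedField k] [AddCommGroup V] [Module k V]
    [FiniteDimensional k V] [Nontrivial V]
    (N₁ N₂ : V → ℝ)
    (h₁zero : ∀ v, N₁ v = 0 ↔ v = 0) (h₂zero : ∀ v, N₂ v = 0 ↔ v = 0)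
    (h₁smul : ∀ (c : k) (v : V), N₁ (c • v) = ‖c‖ * N₁ v)
    (h₂smul : ∀ (c : k) (v : V), N₂ (c • v) = ‖c‖ * N₂ v)
    (h₁add : ∀ v w, N₁ (v + w) ≤ N₁ v + N₁ w)
    (h₂add : ∀ v w, N₂ (v + w) ≤ N₂ v + N₂ w)
    (c₀ α₀ : ℝ) (hc₀ : 0 < c₀) (hα₀ : 1 ≤ α₀)
    (hcomp : ∀ v, α₀⁻¹ * N₁ v ≤ c₀ * N₂ v ∧ c₀ * N₂ v ≤ α₀ * N₁ v) :
    (sInf {α : ℝ | 1 ≤ α ∧ ∃ c : ℝ, 0 < c ∧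
        ∀ v, α⁻¹ * N₁ v ≤ c * N₂ v ∧ c * N₂ v ≤ α * N₁ v}) ^ 2 =
      sSup {ρ : ℝ | ∃ v₁ v₂ : V, v₁ ≠ 0 ∧ v₂ ≠ 0 ∧
        ρ = (N₁ v₁ * N₂ v₂) / (N₂ v₁ * N₁ v₂)} := by
  have p1 := norm_pos_aux k N₁ h₁zero h₁smul h₁add
  have p2 := norm_pos_aux k N₂ h₂zero h₂smul h₂add
  set R : Set ℝ := {ρ : ℝ | ∃ v₁ v₂ : V, v₁ ≠ 0 ∧ v₂ ≠ 0 ∧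
        ρ = (N₁ v₁ * N₂ v₂) / (N₂ v₁ * N₁ v₂)} with hR
  have key : ∀ α c : ℝ, 1 ≤ α → 0 < c →
      (∀ v, α⁻¹ * N₁ v ≤ c * N₂ v ∧ c * N₂ v ≤ α * N₁ v) → ∀ ρ ∈ R, ρ ≤ α ^ 2 := by
    rintro α c hα hc h ρ ⟨v₁, v₂, hv₁, hv₂, rfl⟩
    have hα0 : 0 < α := by linarith
    have a1 := p1 v₁ hv₁
    have a2 := p1 v₂ hv₂
    have b1 := p2 v₁ hv₁
    have b2 := p2 v₂ hv₂
    have e1 : N₁ v₁ ≤ α * (c * N₂ v₁) := (inv_mul_le_iff₀ hα0).1 (h v₁).1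
    have e2 := (h v₂).2
    rw [div_le_iff₀ (by positivity)]
    have e3 := mul_le_mul e1 e2 (by positivity) (by positivity)
    refine le_of_mul_le_mul_left ?_ hc
    nlinarith [e3]
  have hbdd : BddAbove R := ⟨α₀ ^ 2, fun ρ hρ => key α₀ c₀ hα₀ hc₀ hcomp ρ hρ⟩
  obtain ⟨w, hw⟩ := exists_ne (0 : V)
  have w1 := p1 w hw
  have w2 := p2 w hw
  have h1R : (1 : ℝ) ∈ R := ⟨w, w, hw, hw, by field_simp⟩
  have hS1 : 1 ≤ sSup R := le_csSup hbdd h1R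
  set S := sSup R with hS
  have hS0 : 0 ≤ S := by linarith
  have hle : ∀ v₁ v₂ : V, v₁ ≠ 0 → v₂ ≠ 0 → N₁ v₁ / N₂ v₁ ≤ S * N₁ v₂ / N₂ v₂ := by
    intro v₁ v₂ hv₁ hv₂
    have a1 := p1 v₁ hv₁
    have a2 := p1 v₂ hv₂
    have b1 := p2 v₁ hv₁
    have b2 := p2 v₂ hv₂
    have : (N₁ v₁ * N₂ v₂) / (N₂ v₁ * N₁ v₂) ≤ S := le_csSup hbdd ⟨v₁, v₂, hv₁, hv₂, rfl⟩
    rw [div_le_iff₀ (by positivity)] at this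
    rw [div_le_div_iff₀ b1 b2]
    linarith
  set T : Set ℝ := {r : ℝ | ∃ v : V, v ≠ 0 ∧ r = N₁ v / N₂ v} with hT
  have hTb : ∀ v : V, v ≠ 0 → S * N₁ v / N₂ v ∈ upperBounds T := by
    rintro v hv r ⟨u, hu, rfl⟩
    exact hle u v hu hv
  have hTne : T.Nonempty := ⟨_, w, hw, rfl⟩
  have hM : ∀ v : V, v ≠ 0 → N₁ v / N₂ v ≤ sSup T := fun v hv =>
    le_csSup ⟨_, hTb w hw⟩ ⟨v, hv, rfl⟩
  have hM' : ∀ v : V, v ≠ 0 → sSup T ≤ S * N₁ v / N₂ v := fun v hv =>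
    csSup_le hTne (hTb v hv)
  have hM0 : 0 < sSup T := lt_of_lt_of_le (by positivity) (hM w hw)
  have hq : 0 < √S := Real.sqrt_pos.2 (by linarith)
  have hqq : √S * √S = S := Real.mul_self_sqrt hS0
  have hleast : IsLeast {α : ℝ | 1 ≤ α ∧ ∃ c : ℝ, 0 < c ∧
        ∀ v, α⁻¹ * N₁ v ≤ c * N₂ v ∧ c * N₂ v ≤ α * N₁ v} (√S) := by
    constructor
    · refine ⟨Real.one_le_sqrt.2 hS1, sSup T / √S, by positivity, fun v => ?_⟩
      by_cases hv : v = 0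
      · subst hv
        simp [(h₁zero 0).2 rfl, (h₂zero 0).2 rfl]
      have a := hM v hv
      have b := hM' v hv
      rw [div_le_iff₀ (p2 v hv)] at a
      rw [le_div_iff₀ (p2 v hv)] at b
      constructor
      · rw [inv_mul_eq_div, div_mul_eq_mul_div]
        exact div_le_div_of_nonneg_right a hq.le
      · rw [div_mul_eq_mul_div, div_le_iff₀ hq]
        calc _ ≤ _ := b
          _ = √S * √S * N₁ v := by rw [hqq]
          _ = _ := by ring
    · rintro α ⟨hα, c, hc, h⟩
      exact Real.sqrt_le_iff.2 ⟨by linarith, csSup_le ⟨1, h1R⟩ (key α c hα hc h)⟩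
  rw [hleast.csInf_eq, Real.sq_sqrt hS0]
end

section
/- Let F be a field of characteristic different from 2, let G be a symmetric invertible 3×3 matrix over F, and let X be a 3×3 matrix over F satisfying Xᵀ·G + G·X = 0 (i.e. X lies in the orthogonal Lie algebra of the nondegenerate quadratic form determined by G) and X·X = 0. Then X = 0. -/
open Matrix
/-- Over a field of characteristic different from 2, the orthogonal Lie algebra
of a nondegenerate quadratic form in dimension 3 contains no nonzero
square-zero matrix: if `Xᵀ G + G X = 0` with `G` symmetric invertible and
`X² = 0`, then `X = 0`. -/
theorem so3_no_square_zero_nilpotent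
    (F : Type*) [Field F] (h2 : (2 : F) ≠ 0)
    (G X : Matrix (Fin 3) (Fin 3) F) (hG : G.IsSymm) (hGunit : IsUnit G)
    (hX : Xᵀ * G + G * X = 0) (hX2 : X * X = 0) : X = 0 := by
  have hA : (G * X)ᵀ = -(G * X) := by
    rw [Matrix.transpose_mul, hG.eq]
    exact eq_neg_of_add_eq_zero_left hX
  have hAX : (G * X) * X = 0 := by rw [Matrix.mul_assoc, hX2, Matrix.mul_zero]
  obtain ⟨A, hAd⟩ : ∃ A, A = G * X := ⟨_, rfl⟩
  rw [← hAd] at hA hAX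
  have sk : ∀ i j, A j i = -A i j := fun i j => by
    have := congrFun (congrFun hA i) j
    simpa using this
  have dg : ∀ i, A i i = 0 := fun i => by
    have h := sk i i
    have : (2 : F) * A i i = 0 := by linear_combination h
    exact (mul_eq_zero.mp this).resolve_left h2
  have e : ∀ i j, A i j = G i 0 * X 0 j + G i 1 * X 1 j + G i 2 * X 2 j := fun i j => by
    rw [hAd, Matrix.mul_apply, Fin.sum_univ_three]
  have k : ∀ i j, A i 0 * X 0 j + A i 1 * X 1 j + A i 2 * X 2 j = 0 := fun i j => by
    have := congrFun (congrFun hAX i) j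
    rwa [Matrix.mul_apply, Fin.sum_univ_three] at this
  have r0 : ∀ j, A 0 1 * X 1 j + A 0 2 * X 2 j = 0 := fun j => by
    linear_combination k 0 j - X 0 j * dg 0
  have r1 : ∀ j, -A 0 1 * X 0 j + A 1 2 * X 2 j = 0 := fun j => by
    linear_combination k 1 j - X 1 j * dg 1 - X 0 j * sk 0 1
  have r2 : ∀ j, A 0 2 * X 0 j + A 1 2 * X 1 j = 0 := fun j => by
    linear_combination -k 2 j + X 2 j * dg 2 + X 0 j * sk 0 2 + X 1 j * sk 1 2
  -- if the three products are rank one, the skew entry vanishes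
  have key : ∀ (i l : Fin 3) (q : Fin 3 → F) (y : Fin 3 → F),
      (∀ m n, A i l * A m n = q m * y n) → A i l = 0 := by
    intro i l q y h
    have h1 := h i i
    have h3 := h i l
    have h4 := h l i
    rw [dg i] at h1
    rw [sk i l] at h4
    have : A i l ^ 4 = 0 := by
      linear_combination A i l * A i l * h3 - q i * y l * h4 + q l * y l * h1
    exact pow_eq_zero_iff (by norm_num) |>.mp this
  have a0 : A 0 1 = 0 := key 0 1 (fun m => G m 0 * A 1 2 - G m 1 * A 0 2 + G m 2 * A 0 1)
    (fun n => X 2 n) fun m n => by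
      linear_combination A 0 1 * e m n + G m 1 * r0 n - G m 0 * r1 n
  have b0 : A 0 2 = 0 := key 0 2 (fun m => -G m 0 * A 1 2 + G m 1 * A 0 2 - G m 2 * A 0 1)
    (fun n => X 1 n) fun m n => by
      linear_combination A 0 2 * e m n + G m 0 * r2 n + G m 2 * r0 n
  have c0 : A 1 2 = 0 := key 1 2 (fun m => G m 0 * A 1 2 - G m 1 * A 0 2 + G m 2 * A 0 1)
    (fun n => X 0 n) fun m n => by
      linear_combination A 1 2 * e m n + G m 1 * r2 n + G m 2 * r1 n
  have hA0 : A = 0 := by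
    ext i j
    fin_cases i <;> fin_cases j <;> simp [dg, a0, b0, c0, sk 0 1, sk 0 2, sk 1 2]
  rw [hA0] at hAd
  exact (hGunit.mul_right_eq_zero).mp hAd.symm
end

section
/- Let F be a field, n ≥ 1 an integer, and let A be an étale subalgebra of Mₙ(F) of dimension n, i.e. a commutative F-subalgebra A of the n×n matrices over F such that A is reduced (its only nilpotent element is 0) and dim_F A = n. Then there exists a vector v ∈ Fⁿ such that the F-linear map A → Fⁿ sending a to a·v (matrix times column vector) is a bijection. In particular, Fⁿ is a free A-module of rank 1. -/
theorem exists_pow_aux {R : Type*} [Ring R] [IsArtinianRing R] (hc : ∀ x z : R, x * z = z * x)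
    (a : R) : ∃ (k : ℕ) (y : R), a ^ (k+1) * y = a ^ k := by
  letI : CommRing R := { (inferInstance : Ring R) with mul_comm := hc }
  obtain ⟨k, y, hy⟩ := IsArtinian.exists_pow_succ_smul_dvd a (1 : R)
  exact ⟨k, y, by simpa using hy⟩

/-- If `A ⊆ Mₙ(F)` is an étale (commutative, reduced) subalgebra of dimension
`n`, then `Fⁿ` is a free `A`-module of rank one: there is a vector `v ∈ Fⁿ`
such that `a ↦ a·v` is a bijection from `A` to `Fⁿ`. -/
theorem etale_subalgebra_cyclic_vector
    (F : Type*) [Field F] (n : ℕ) (hn : 1 ≤ n)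
    (A : Subalgebra F (Matrix (Fin n) (Fin n) F))
    (hcomm : ∀ a ∈ A, ∀ b ∈ A, a * b = b * a)
    (hred : ∀ a ∈ A, IsNilpotent a → a = 0)
    (hdim : Module.finrank F ↥A = n) :
    ∃ v : Fin n → F,
      Function.Bijective (fun a : ↥A => Matrix.mulVec (a : Matrix (Fin n) (Fin n) F) v) := by
  let f : (Fin n → F) → (A →ₗ[F] (Fin n → F)) := fun v =>
    { toFun := fun a => Matrix.mulVec (a : Matrix (Fin n) (Fin n) F) v
      map_add' := fun a b => by simp [Matrix.add_mulVec]
      map_smul' := fun c a => by simp [Matrix.smul_mulVec] }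
  have hf : ∀ v a, f v a = Matrix.mulVec (a : Matrix (Fin n) (Fin n) F) v := fun _ _ => rfl
  have hreg : ∀ a : A, ∃ y : A, a = a * a * y := by
    intro a
    have : IsArtinianRing A := IsArtinianRing.of_finite F A
    obtain ⟨k, y, h1⟩ := exists_pow_aux (fun x z : A => Subtype.ext (hcomm _ x.2 _ z.2)) a
    have hc : ∀ x z : A, Commute x z := fun x z => Subtype.ext (hcomm _ x.2 _ z.2)
    refine ⟨y, ?_⟩
    have h0 : a ^ k * (1 - a * y) = 0 := by
      rw [mul_sub, mul_one, ← mul_assoc, ← pow_succ, h1, sub_self]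
    have hn : (a * (1 - a * y)) ^ (k+1) = 0 := by
      rw [(hc _ _).mul_pow, pow_succ' (1 - a * y), pow_succ', ← mul_assoc, mul_assoc a, h0]
      simp
    have h2 : a * (1 - a * y) = 0 := by
      apply Subtype.ext
      apply hred _ (a * (1 - a * y)).2
      exact ⟨k+1, by simpa using congrArg Subtype.val hn⟩
    rw [mul_sub, mul_one, sub_eq_zero] at h2
    rw [mul_assoc]; exact h2
  obtain ⟨_, ⟨v, rfl⟩, hmin⟩ := (wellFounded_lt (α := Submodule F A)).has_min
    (Set.range fun v => LinearMap.ker (f v)) ⟨_, ⟨0, rfl⟩⟩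
  have hinj : Function.Injective (f v) := by
    rw [← LinearMap.ker_eq_bot, Submodule.eq_bot_iff]
    intro a ha
    by_contra hne
    obtain ⟨y, hy⟩ := hreg a
    have hc : ∀ x z : A, x * z = z * x := fun x z => Subtype.ext (hcomm _ x.2 _ z.2)
    have hmul : ∀ (x z : A) w, f w (x * z) = Matrix.mulVec (x : Matrix (Fin n) (Fin n) F) (f w z) := by
      intro x z w; simp [hf]
    obtain ⟨e, he⟩ : ∃ e, e = y * a := ⟨_, rfl⟩
    have hev : f v e = 0 := by
      rw [he, hmul, LinearMap.mem_ker.1 ha, Matrix.mulVec_zero]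
    have hea : a * e = a := by rw [he, hc y, ← mul_assoc]; exact hy.symm
    have hee : e * e = e := by
      nth_rw 1 [he]; rw [mul_assoc, hea, ← he]
    have he0 : e ≠ 0 := by
      rintro rfl; exact hne (by simpa using hea.symm)
    obtain ⟨w, hw⟩ : ∃ w, f w e ≠ 0 := by
      by_contra! h
      apply he0
      apply Subtype.ext
      apply Matrix.mulVec_injective
      funext w
      simpa [hf] using h w
    have hadd : ∀ b, f (v + f w e) b = f v b + f w (b * e) := by
      intro b; rw [hmul]; simp [hf, Matrix.mulVec_add]
    apply hmin _ ⟨v + f w e, rfl⟩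
    refine lt_of_le_of_ne ?_ ?_
    · intro b hb
      rw [LinearMap.mem_ker] at hb ⊢
      have h1 : f (v + f w e) (e * b) = 0 := by rw [hmul, hb, Matrix.mulVec_zero]
      rw [hadd, hc e b, hmul b e v, hev, Matrix.mulVec_zero, zero_add, mul_assoc, hee] at h1
      rw [hadd, h1, add_zero] at hb
      exact hb
    · intro h
      have h1 : e ∈ LinearMap.ker (f (v + f w e)) := by
        have h2 : e ∈ LinearMap.ker (f v) := hev
        rw [← show LinearMap.ker (f (v + f w e)) = LinearMap.ker (f v) from h] at h2
        exact h2
      rw [LinearMap.mem_ker, hadd, hev, hee, zero_add] at h1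
      exact hw h1
  refine ⟨v, hinj, ?_⟩
  exact (LinearMap.injective_iff_surjective_of_finrank_eq_finrank (by simp [hdim])).1 hinj
end

section
/- Let F be a field, n ≥ 1 an integer, and let A be an étale subalgebra of Mₙ(F) of dimension n, i.e. a commutative F-subalgebra A of the n×n matrices over F such that A is reduced (its only nilpotent element is 0) and dim_F A = n. Then for every a ∈ A, the trace of the F-linear endomorphism of A given by multiplication by a (the algebra trace tr_{A/F}(a)) equals the matrix trace of a as an element of Mₙ(F). -/
set_option synthInstance.maxHeartbeats 400000
theorem exists_separating_vector {F V R : Type*} [Field F] [AddCommGroup V] [Module F V]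
    [CommRing R] [IsArtinianRing R] [IsReduced R] (f : R →+* Module.End F V)
    (hf : Function.Injective f) : ∃ v : V, ∀ r : R, f r v = 0 → r = 0 := by
  classical
  let I : V → Ideal R := fun v =>
    { carrier := {r | f r v = 0}
      add_mem' := by
        intro a b ha hb
        simp only [Set.mem_setOf_eq] at *
        simp [ha, hb]
      zero_mem' := by simp
      smul_mem' := by
        intro c x hx
        simp only [Set.mem_setOf_eq] at *
        simp [hx] }
  have hI : ∀ v r, r ∈ I v ↔ f r v = 0 := fun v r => Iff.rfl
  obtain ⟨J, ⟨v, rfl⟩, hmin⟩ := (wellFounded_lt (α := Ideal R)).has_min (Set.range I) ⟨_, 0, rfl⟩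
  refine ⟨v, fun r hr => ?_⟩
  have hss : IsSemisimpleRing R := IsArtinianRing.isSemisimpleRing_of_isReduced R
  obtain ⟨e, he, hIe⟩ := IsSemisimpleRing.ideal_eq_span_idempotent (I v)
  have hev : f e v = 0 := by
    rw [← hI, hIe]; exact Ideal.mem_span_singleton_self e
  have hee : e * e = e := he
  by_cases h0 : e = 0
  · have : r ∈ I v := hr
    rw [hIe, h0] at this
    simpa using this
  exfalso
  obtain ⟨w, hw⟩ : ∃ w, f e w ≠ 0 := by
    by_contra! h
    exact h0 (hf (by rw [map_zero]; exact LinearMap.ext h))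
  have key : ∀ x y u, f (x * y) u = f x (f y u) := by intro x y u; simp
  apply hmin _ ⟨v + f e w, rfl⟩
  refine lt_of_le_of_ne (fun s hs => ?_) (fun h => ?_)
  · rw [hI] at hs ⊢
    have h1 : f e (f s (v + f e w)) = 0 := by rw [hs, map_zero]
    rw [← key, map_add, ← key, mul_comm e s, mul_assoc, hee, key, hev, map_zero, zero_add] at h1
    rw [map_add, ← key, h1, add_zero] at hs
    exact hs
  · have : e ∈ I (v + f e w) := by rw [h]; exact hev
    rw [hI, map_add, hev, ← key, hee, zero_add] at this
    exact hw this

/-- For an étale (commutative, reduced) subalgebra `A ⊆ Mₙ(F)` of dimension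
`n`, the algebra trace `tr_{A/F}(a)` (the trace of multiplication by `a` as an
`F`-linear endomorphism of `A`) equals the matrix trace of `a`. -/
theorem etale_subalgebra_algebra_trace_eq_matrix_trace
    (F : Type*) [Field F] (n : ℕ) (hn : 1 ≤ n)
    (A : Subalgebra F (Matrix (Fin n) (Fin n) F))
    (hcomm : ∀ a ∈ A, ∀ b ∈ A, a * b = b * a)
    (hred : ∀ a ∈ A, IsNilpotent a → a = 0)
    (hdim : Module.finrank F ↥A = n)
    (a : Matrix (Fin n) (Fin n) F) (ha : a ∈ A) :
    LinearMap.trace F ↥A (LinearMap.mulLeft F (⟨a, ha⟩ : ↥A)) = Matrix.trace a := by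
  classical
  letI : CommRing ↥A :=
    { (inferInstance : Ring ↥A) with
      mul_comm := fun x y => Subtype.ext (hcomm x.1 x.2 y.1 y.2) }
  haveI : IsArtinianRing ↥A := IsArtinianRing.of_finite F ↥A
  haveI : IsReduced ↥A := ⟨fun x hx => Subtype.ext (hred x.1 x.2 (hx.map A.val))⟩
  let g : ↥A →+* Module.End F (Fin n → F) :=
    (Matrix.toLinAlgEquiv' (R := F) (n := Fin n)).toAlgHom.toRingHom.comp A.val.toRingHom
  have hg : ∀ x u, g x u = (x : Matrix (Fin n) (Fin n) F).mulVec u := fun x u => rfl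
  have hginj : Function.Injective g := by
    intro x y h
    apply Subtype.ext
    exact (Matrix.toLinAlgEquiv' (R := F) (n := Fin n)).injective h
  obtain ⟨v, hv⟩ := exists_separating_vector g hginj
  let φ : ↥A →ₗ[F] (Fin n → F) :=
    { toFun := fun x => (x : Matrix (Fin n) (Fin n) F).mulVec v
      map_add' := fun x y => by simp [Matrix.add_mulVec]
      map_smul' := fun c x => by simp [Matrix.smul_mulVec] }
  have hφ : Function.Injective φ := by
    rw [injective_iff_map_eq_zero]
    exact fun x hx => hv x hx
  let ψ := LinearEquiv.ofInjectiveOfFinrankEq φ hφ (by rw [hdim]; simp)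
  have hψ : ∀ x : ↥A, ψ x = (x : Matrix (Fin n) (Fin n) F).mulVec v := fun x => rfl
  rw [← Matrix.trace_toLin'_eq, ← LinearMap.trace_conj' _ ψ]
  congr 1
  apply LinearMap.ext
  intro u
  obtain ⟨x, rfl⟩ := ψ.surjective u
  rw [LinearEquiv.conj_apply_apply, LinearEquiv.symm_apply_apply, hψ, hψ, Matrix.toLin'_apply,
    Matrix.mulVec_mulVec]
  rfl
end

section
/- Let p be a prime, n ≥ 1, and let A be an étale subalgebra of Mₙ(ℚ_p) of dimension n, i.e. a commutative ℚ_p-subalgebra A of the n×n matrices over ℚ_p such that A is reduced (its only nilpotent element is 0) and dim_{ℚ_p} A = n. Set Λ = A ∩ Mₙ(ℤ_p) (the elements of A all of whose matrix entries are p-adic integers), and let Λ* = { y ∈ A : trace(y·x) ∈ ℤ_p for all x ∈ Λ }, where trace denotes the matrix trace. If Λ* ⊆ Λ (i.e. Λ is self-dual with respect to the trace pairing), then every element of A that is integral over ℤ_p lies in Λ; equivalently, Λ equals the integral closure of ℤ_p in A. -/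
theorem aux_trace_integral (p : ℕ) [Fact p.Prime] (n : ℕ)
    (M : Matrix (Fin n) (Fin n) ℚ_[p]) (hM : IsIntegral ℤ_[p] M) :
    ‖Matrix.trace M‖ ≤ 1 := by
  let K := AlgebraicClosure ℚ_[p]
  let f : Matrix (Fin n) (Fin n) ℚ_[p] →ₐ[ℚ_[p]] Matrix (Fin n) (Fin n) K :=
    (Algebra.ofId ℚ_[p] K).mapMatrix
  obtain ⟨P, hPm, hP⟩ := hM.map (f.restrictScalars ℤ_[p])
  have key : IsIntegral ℤ_[p] (Matrix.trace (f M)) := by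
    rw [Matrix.trace_eq_sum_roots_charpoly]
    apply IsIntegral.multiset_sum
    intro μ hμ
    have h1 : μ ∈ spectrum K (f M) :=
      Matrix.mem_spectrum_iff_isRoot_charpoly.2 (Polynomial.isRoot_of_mem_roots hμ)
    have hne : Nontrivial (Matrix (Fin n) (Fin n) K) := by
      by_contra hc
      rw [not_nontrivial_iff_subsingleton] at hc
      rw [spectrum.of_subsingleton] at h1
      exact h1
    have h2 := spectrum.subset_polynomial_aeval (f M) (P.map (algebraMap ℤ_[p] K))
      ⟨μ, h1, rfl⟩
    rw [Polynomial.aeval_map_algebraMap] at h2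
    have h3 : Polynomial.aeval (f M) P = 0 := hP
    rw [h3, spectrum.zero_eq] at h2
    refine ⟨P, hPm, ?_⟩
    rw [← Polynomial.eval_map]
    exact h2
  have ht : Matrix.trace (f M) = algebraMap ℚ_[p] K (Matrix.trace M) := by
    simp [f, Matrix.trace, Algebra.ofId_apply]
  rw [ht, isIntegral_algebraMap_iff (algebraMap ℚ_[p] K).injective] at key
  obtain ⟨y, hy⟩ := IsIntegrallyClosed.isIntegral_iff.1 key
  rw [← hy]
  exact y.2

theorem aux_int (p : ℕ) [Fact p.Prime] (n : ℕ)
    (a : Matrix (Fin n) (Fin n) ℚ_[p]) (P : Polynomial ℚ_[p]) (hm : P.Monic)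
    (hc : ∀ i, ‖P.coeff i‖ ≤ 1) (h0 : Polynomial.aeval a P = 0) : IsIntegral ℤ_[p] a := by
  have hl : P ∈ Polynomial.lifts (algebraMap ℤ_[p] ℚ_[p]) := by
    rw [Polynomial.lifts_iff_coeff_lifts]
    intro i
    exact ⟨⟨P.coeff i, hc i⟩, rfl⟩
  obtain ⟨Q, hQ, -, hQm⟩ := Polynomial.lifts_and_natDegree_eq_and_monic hl hm
  refine ⟨Q, hQm, ?_⟩
  rw [← hQ, Polynomial.aeval_map_algebraMap] at h0
  exact h0

theorem aux_int' (p : ℕ) [Fact p.Prime] (n : ℕ)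
    (x : Matrix (Fin n) (Fin n) ℚ_[p]) (hx : ∀ i j, ‖x i j‖ ≤ 1) : IsIntegral ℤ_[p] x := by
  let X : Matrix (Fin n) (Fin n) ℤ_[p] := fun i j => ⟨x i j, hx i j⟩
  have := (Matrix.isIntegral X).map (Algebra.ofId ℤ_[p] ℚ_[p]).mapMatrix
  exact this

theorem aux_mul (p : ℕ) [Fact p.Prime] (n : ℕ)
    (A : Subalgebra ℚ_[p] (Matrix (Fin n) (Fin n) ℚ_[p]))
    (hcomm : ∀ a ∈ A, ∀ b ∈ A, a * b = b * a)
    (a x : Matrix (Fin n) (Fin n) ℚ_[p]) (ha : a ∈ A) (hx : x ∈ A)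
    (hai : IsIntegral ℤ_[p] a) (hxi : IsIntegral ℤ_[p] x) : IsIntegral ℤ_[p] (a * x) := by
  letI : CommRing A := { (inferInstance : Ring A) with
    mul_comm := fun u v => Subtype.ext (hcomm u u.2 v v.2) }
  let g : A →ₐ[ℤ_[p]] Matrix (Fin n) (Fin n) ℚ_[p] := A.val.restrictScalars ℤ_[p]
  have hg : Function.Injective g := Subtype.val_injective
  have h1 : IsIntegral ℤ_[p] (⟨a, ha⟩ : A) := (isIntegral_algHom_iff g hg).1 hai
  have h2 : IsIntegral ℤ_[p] (⟨x, hx⟩ : A) := (isIntegral_algHom_iff g hg).1 hxi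
  exact (h1.mul h2).map g

/-- Let `A ⊆ Mₙ(ℚ_p)` be an étale (commutative, reduced) subalgebra of
dimension `n` and `Λ = A ∩ Mₙ(ℤ_p)`. If the trace-dual `Λ*` is contained in
`Λ`, then every element of `A` integral over `ℤ_p` (i.e. killed by a monic
polynomial with `ℤ_p`-coefficients) lies in `Λ`. -/
theorem selfdual_order_contains_integral_elements
    (p : ℕ) [Fact p.Prime] (n : ℕ) (hn : 1 ≤ n)
    (A : Subalgebra ℚ_[p] (Matrix (Fin n) (Fin n) ℚ_[p]))
    (hcomm : ∀ a ∈ A, ∀ b ∈ A, a * b = b * a)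
    (hred : ∀ a ∈ A, IsNilpotent a → a = 0)
    (hdim : Module.finrank ℚ_[p] ↥A = n)
    (hselfdual : ∀ y ∈ A,
      (∀ x ∈ A, (∀ i j, ‖x i j‖ ≤ 1) → ‖Matrix.trace (y * x)‖ ≤ 1) →
        ∀ i j, ‖y i j‖ ≤ 1) :
    ∀ a ∈ A,
      (∃ P : Polynomial ℚ_[p], P.Monic ∧ (∀ i, ‖P.coeff i‖ ≤ 1) ∧
        Polynomial.aeval a P = 0) →
      ∀ i j, ‖a i j‖ ≤ 1 := by
  rintro a ha ⟨P, hm, hc, h0⟩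
  refine hselfdual a ha fun x hx hxi => ?_
  exact aux_trace_integral p n _ (aux_mul p n A hcomm a x ha hx (aux_int p n a P hm hc h0)
    (aux_int' p n x hxi))
end

section
/- For every real number C > 0 there exists D₀ > 0 such that every totally real cubic number field K (a number field with [K:ℚ] = 3 all of whose infinite places are real) whose absolute discriminant satisfies |disc(K)| ≥ D₀ has regulator greater than C. In other words, the regulator of a totally real cubic field tends to infinity as its discriminant tends to infinity. -/
open NumberField

open NumberField.Units NumberField.Units.dirichletUnitTheorem MeasureTheory in
open scoped Classical in
/-- Minkowski: a short non-torsion unit. -/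
lemma aux_short_unit (K : Type) [Field K] [NumberField K]
    (hcard : Fintype.card (InfinitePlace K) = 3) (C : ℝ) (hC : 0 < C)
    (hreg : regulator K ≤ C) :
    ∃ u : (𝓞 K)ˣ, u ∉ torsion K ∧ ‖logEmbedding K (Additive.ofMul u)‖ ≤ C + 1 := by
  have hr : rank K = 2 := by rw [rank, hcard]
  have hfr : Module.finrank ℝ (logSpace K) = 2 := by
    rw [← hr]; exact Units.finrank_eq_rank K
  have hcard2 : Fintype.card {w : InfinitePlace K // w ≠ w₀} = 2 := by
    rw [← hfr, Module.finrank_fintype_fun_eq_card]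
  let b := (basisUnitLattice K)
  have fund := ZLattice.isAddFundamentalDomain b (volume : Measure (logSpace K))
  have hcov := ZLattice.covolume_eq_measure_fundamentalDomain (unitLattice K) volume fund
  set F := ZSpan.fundamentalDomain (b.ofZLatticeBasis ℝ (unitLattice K)) with hF
  have hfin : volume F ≠ ⊤ := (ZSpan.fundamentalDomain_isBounded _).measure_lt_top.ne
  have hvol : volume F = ENNReal.ofReal (regulator K) := by
    rw [regulator, hcov, Measure.real, ENNReal.ofReal_toReal hfin]
  have hlt : volume F * 2 ^ Module.finrank ℝ (logSpace K) <
      volume (Metric.closedBall (0 : logSpace K) (C + 1)) := by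
    rw [hfr, Real.volume_pi_closedBall _ (by linarith), hcard2, hvol,
      show (2 : ENNReal) ^ 2 = ENNReal.ofReal 4 by norm_num,
      ← ENNReal.ofReal_mul (regulator_pos K).le]
    apply (ENNReal.ofReal_lt_ofReal_iff (by positivity)).2
    nlinarith
  have : Countable (unitLattice K).toAddSubgroup :=
    inferInstanceAs (Countable (unitLattice K))
  obtain ⟨x, hx0, hx⟩ := exists_ne_zero_mem_lattice_of_measure_mul_two_pow_lt_measure
    (L := (unitLattice K).toAddSubgroup) (μ := volume) fund
    (fun x hx ↦ by simpa using hx) (convex_closedBall _ _) hlt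
  obtain ⟨x, hxm⟩ := x
  obtain ⟨y, _, hy⟩ := id hxm
  refine ⟨y.toMul, fun h ↦ hx0 ?_, ?_⟩
  · rw [← logEmbedding_eq_zero_iff] at h
    apply Subtype.ext
    exact hy.symm.trans h
  · have : logEmbedding K (Additive.ofMul y.toMul) = x := hy
    rw [this]
    simpa using hx

lemma aux_natDegree (K : Type) [Field K] [NumberField K] (h3 : Module.finrank ℚ K = 3)
    (u : (𝓞 K)ˣ) (hu : u ∉ Units.torsion K) : (minpoly ℚ (u : K)).natDegree = 3 := by
  have hint : IsIntegral ℚ (u : K) := Algebra.IsIntegral.isIntegral _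
  have hd := minpoly.degree_dvd hint
  rw [h3] at hd
  rcases (Nat.dvd_prime Nat.prime_three).1 hd with h | h
  · exfalso
    rw [minpoly.natDegree_eq_one_iff] at h
    obtain ⟨q, hq⟩ := h
    apply hu
    have hn := Units.norm (K := K) u
    rw [← hq, Algebra.norm_algebraMap, h3, abs_pow] at hn
    have hq1 : |q| = 1 := by
      exact (pow_eq_one_iff_of_nonneg (abs_nonneg q) (by norm_num)).1 hn
    rw [Units.mem_torsion]
    intro w
    rw [← hq]
    rcases eq_or_eq_neg_of_abs_eq hq1 with rfl | rfl <;> rw [← InfinitePlace.norm_embedding_eq] <;> simp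
  · exact h

lemma aux_discr_ne_zero (K : Type) [Field K] [NumberField K] (n : ℕ) (a : K)
    (hn : (minpoly ℚ a).natDegree = n) (hK : Module.finrank ℚ K = n) :
    Algebra.discr ℚ (fun i : Fin n ↦ a ^ (i : ℕ)) ≠ 0 := by
  subst hn
  have hli := linearIndependent_pow (K := ℚ) a
  have : Nonempty (Fin (minpoly ℚ a).natDegree) := by
    rw [← hK]; exact ⟨⟨0, Module.finrank_pos⟩⟩
  have h := Algebra.discr_not_zero_of_basis ℚ
    (basisOfLinearIndependentOfCardEqFinrank hli (by simp [hK]))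
  simpa using h

lemma aux_discr_le (K : Type) [Field K] [NumberField K] (n : ℕ) (c : Fin n → 𝓞 K)
    (hK : Module.finrank ℚ K = n)
    (h0 : Algebra.discr ℚ (fun i : Fin n ↦ (c i : K)) ≠ 0) :
    |(discr K : ℝ)| ≤ |((Algebra.discr ℚ (fun i : Fin n ↦ (c i : K)) : ℚ) : ℝ)| := by
  classical
  have hcast : ((Algebra.discr ℤ c : ℤ) : ℚ) = Algebra.discr ℚ (fun i : Fin n ↦ (c i : K)) := by
    rw [Algebra.discr_def, Algebra.discr_def, Int.cast_det]
    congr 1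
    ext i j
    simp only [Matrix.map_apply, Algebra.traceMatrix_apply, Algebra.traceForm_apply]
    rw [Algebra.coe_trace_int]
    simp
  let b : Module.Basis (Fin n) ℤ (𝓞 K) := (RingOfIntegers.basis K).reindex
    (Fintype.equivFinOfCardEq (by
      rw [← Module.finrank_eq_card_basis (RingOfIntegers.basis K), RingOfIntegers.rank, hK]))
  have hP := Algebra.discr_of_matrix_vecMul b (b.toMatrix c)
  rw [Module.Basis.toMatrix_map_vecMul, discr_eq_discr] at hP
  rw [← hcast] at h0 ⊢
  have h0' : Algebra.discr ℤ c ≠ 0 := by exact_mod_cast h0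
  have key : |discr K| ≤ |Algebra.discr ℤ c| :=
    Int.le_of_dvd (abs_pos.2 h0') ((abs_dvd_abs _ _).2 ⟨_, hP.trans (mul_comm _ _)⟩)
  have key' : ((|discr K| : ℤ) : ℝ) ≤ ((|Algebra.discr ℤ c| : ℤ) : ℝ) := Int.cast_le.2 key
  simpa using key'

lemma aux_discr_upper (K : Type) [Field K] [NumberField K] (n : ℕ) (c : Fin n → K)
    (hK : Module.finrank ℚ K = n) (B : ℝ) (hB : ∀ (φ : K →+* ℂ) i, ‖φ (c i)‖ ≤ B) :
    |((Algebra.discr ℚ c : ℚ) : ℝ)| ≤ (n.factorial * B ^ n) ^ 2 := by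
  classical
  have e : Fin n ≃ (K →ₐ[ℚ] ℂ) := Fintype.equivOfCardEq (by
    rw [Fintype.card_fin, AlgHom.card, hK])
  have h := Algebra.discr_eq_det_embeddingsMatrixReindex_pow_two ℚ ℂ c e
  have h2 := congrArg (‖·‖) h
  simp only [norm_pow] at h2
  have h3 : ‖algebraMap ℚ ℂ (Algebra.discr ℚ c)‖ = |((Algebra.discr ℚ c : ℚ) : ℝ)| := by
    rw [eq_ratCast, ← Complex.ofReal_ratCast, Complex.norm_real, Real.norm_eq_abs]
  rw [← h3, h2]
  have h4 := Matrix.det_le (A := Algebra.embeddingsMatrixReindex ℚ ℂ c e)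
    (abv := NormedField.toAbsoluteValue ℂ) (x := B) (fun i j ↦ hB (e j).toRingHom i)
  have h5 : ‖(Algebra.embeddingsMatrixReindex ℚ ℂ c e).det‖ ≤ n.factorial * B ^ n := by
    rw [Fintype.card_fin, nsmul_eq_mul] at h4; exact h4
  gcongr

/-- The regulator of a totally real cubic number field tends to infinity with
the absolute discriminant: for every `C > 0` there is `D₀ > 0` such that every
totally real cubic field of absolute discriminant at least `D₀` has regulator
greater than `C`. -/
theorem regulator_totally_real_cubic_tendsto_infty (C : ℝ) (hC : 0 < C) :
    ∃ D₀ : ℝ, 0 < D₀ ∧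
      ∀ (K : Type) [Field K] [NumberField K],
        (∀ v : InfinitePlace K, v.IsReal) →
        Module.finrank ℚ K = 3 →
        D₀ ≤ |(discr K : ℝ)| →
        C < Units.regulator K := by
  set E : ℝ := Real.exp (3 * (C + 1)) with hE
  have hE1 : 1 ≤ E := Real.one_le_exp (by positivity)
  refine ⟨((Nat.factorial 3 : ℕ) * (E ^ 2) ^ 3) ^ 2 + 1, by positivity, ?_⟩
  intro K _ _ hreal h3 hD
  by_contra! hreg
  have hcard : Fintype.card (InfinitePlace K) = 3 := by
    have : IsTotallyReal K := ⟨hreal⟩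
    have h1 := InfinitePlace.card_eq_nrRealPlaces_add_nrComplexPlaces K
    have h2 := InfinitePlace.card_add_two_mul_card_eq_rank K
    have h4 := IsTotallyReal.nrComplexPlaces_eq_zero K
    omega
  obtain ⟨u, hu, hub⟩ := aux_short_unit K hcard C hC hreg
  have hdeg := aux_natDegree K h3 u hu
  have hne := aux_discr_ne_zero K 3 (u : K) hdeg h3
  have hbd : ∀ w : InfinitePlace K, w (u : K) ≤ E := by
    intro w
    have := Units.dirichletUnitTheorem.log_le_of_logEmbedding_le (by positivity) hub w
    rw [hcard] at this
    exact (Real.log_le_iff_le_exp (Units.pos_at_place u w)).1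
      ((le_abs_self _).trans (by exact_mod_cast this))
  have hup := aux_discr_upper K 3 (fun i : Fin 3 ↦ (u : K) ^ (i : ℕ)) h3 (E ^ 2) (by
    intro φ i
    have h := hbd (InfinitePlace.mk φ)
    rw [InfinitePlace.apply] at h
    rw [map_pow, norm_pow]
    calc ‖φ (u : K)‖ ^ (i : ℕ) ≤ E ^ (i : ℕ) := by gcongr
      _ ≤ E ^ 2 := pow_le_pow_right₀ hE1 (by omega))
  have hle := aux_discr_le K 3 (fun i : Fin 3 ↦ (u : 𝓞 K) ^ (i : ℕ)) h3 (by simpa using hne)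
  simp only [map_pow] at hle
  linarith
end
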